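/- arXiv:1405.6544 — 2 statements merged into one kernel-verified Lean document; each statement's English description precedes it below -/
import Mathlib

section
/- Conversely, if U = [[W, Yᴴ],[Y, T(u)]] ⪰ 0 with rank(U) = r, then Y admits an atomic decomposition Y = Σ_{k=1}^{K} c_k a(f_k) φ_k into K ≤ r atoms; hence ‖Y‖_{A,0} ≤ rank(U) for every feasible U. -/
/-! Factor the positive semidefinite block matrix as `U = Bᴴ B`, so that `U` is the Gram matrix of
vectors `x` spanning a space `H` of dimension `rank U`
(`exists_gram_of_posSemidef`). Write `w l`, `v j` for the vectors belonging to the two blocks.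
The Toeplitz structure says `⟪v (j+1), v (k+1)⟫ = ⟪v j, v k⟫`, so there is a linear isometry `S` of
`H` with `v j = S ^ j (v 0)` (`exists_isometry_pow`). An isometry of a finite-dimensional complex
space is diagonalizable with eigenvalues on the unit circle, so `v 0 = ∑ μ, e μ` with at most
`dim H` eigenvectors `e μ` (`exists_eigenvector_sum`). Hence
`Y j l = ⟪v j, w l⟫ = ∑ μ, (conj μ) ^ j * ⟪e μ, w l⟫`, and each `j ↦ (conj μ) ^ j` is an atom
because `|μ| = 1`. This contains the Carathéodory–Fejér decomposition of `T(u)` and the range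
inclusion for `Y` in one stroke, and treats singular and nonsingular `T(u)` alike.
It remains to discard vanishing terms and normalize (`exists_atomic_of_powers`). -/

open Complex Matrix Finset
open scoped ComplexOrder

/-- The atom `a(f) = (1, e^{i2πf}, …, e^{i2π(N-1)f})` as a vector in `ℂ^N`. -/
noncomputable def atom (N : ℕ) (f : ℝ) : Fin N → ℂ :=
  fun j => Complex.exp (2 * Real.pi * Complex.I * ((j : ℕ) : ℂ) * (f : ℂ))

/-- Restriction of the atom to the index set `Ω`. -/
noncomputable def atomRes (N : ℕ) (Ω : Finset (Fin N)) (f : ℝ) : Ω → ℂ :=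
  fun m => atom N f (m : Fin N)

/-- Spark of the continuous dictionary `A¹_Ω`: the smallest number of distinct atoms
`a_Ω(f)` with `f ∈ [0,1)` that are linearly dependent. -/
noncomputable def spark (N : ℕ) (Ω : Finset (Fin N)) : ℕ :=
  sInf {k | ∃ S : Finset ℝ, S.card = k ∧ (↑S : Set ℝ) ⊆ Set.Ico (0 : ℝ) 1 ∧
    ¬ LinearIndependent ℂ (fun f : S => atomRes N Ω (f : ℝ))}

/-- The atomic `ℓ₀` norm of `Y ∈ ℂ^{N×L}`: the smallest number of atoms `a(f)φ`
(with `f ∈ [0,1)`, `‖φ‖₂ = 1` and positive coefficients) summing to `Y`. -/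
noncomputable def AL0 (N L : ℕ) (Y : Matrix (Fin N) (Fin L) ℂ) : ℕ :=
  sInf {K | ∃ (c : Fin K → ℝ) (f : Fin K → ℝ) (φ : Fin K → Fin L → ℂ),
    (∀ k, 0 < c k) ∧ (∀ k, f k ∈ Set.Ico (0 : ℝ) 1) ∧
    (∀ k, ∑ l, Complex.normSq (φ k l) = 1) ∧
    (∀ j l, Y j l = ∑ k, (c k : ℂ) * atom N (f k) j * φ k l)}

/-- The rows of `Y` indexed by `Ω`. -/
def rowsRes {N L : ℕ} (Ω : Finset (Fin N)) (Y : Matrix (Fin N) (Fin L) ℂ) :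
    Matrix Ω (Fin L) ℂ := fun m l => Y (m : Fin N) l

/-- The Hermitian Toeplitz matrix `T(u)` with first row `uᵀ`. -/
noncomputable def Toep (N : ℕ) (u : Fin N → ℂ) : Matrix (Fin N) (Fin N) ℂ :=
  fun j k =>
    if _h : (j : ℕ) ≤ (k : ℕ) then
      u ⟨(k : ℕ) - (j : ℕ), Nat.lt_of_le_of_lt (Nat.sub_le _ _) k.isLt⟩
    else
      (starRingEnd ℂ) (u ⟨(j : ℕ) - (k : ℕ), Nat.lt_of_le_of_lt (Nat.sub_le _ _) j.isLt⟩)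

/-- The block matrix `U = [[W, Yᴴ],[Y, T(u)]]`. -/
noncomputable def blockU (N L : ℕ) (W : Matrix (Fin L) (Fin L) ℂ)
    (Y : Matrix (Fin N) (Fin L) ℂ) (u : Fin N → ℂ) :
    Matrix (Fin L ⊕ Fin N) (Fin L ⊕ Fin N) ℂ :=
  Matrix.fromBlocks W Yᴴ Y (Toep N u)

open scoped InnerProductSpace

open scoped MatrixOrder in
/-- A positive semidefinite matrix is the Gram matrix of a family of vectors in a space whose
dimension is the rank of the matrix. -/
lemma exists_gram_of_posSemidef {ι : Type} [Fintype ι] [DecidableEq ι] (U : Matrix ι ι ℂ)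
    (hU : U.PosSemidef) :
    ∃ (H : Submodule ℂ (EuclideanSpace ℂ ι)) (x : ι → H),
      Module.finrank ℂ H = U.rank ∧ ∀ i j, U i j = ⟪x i, x j⟫_ℂ := by
  obtain ⟨B, rfl⟩ : ∃ B : Matrix ι ι ℂ, U = Bᴴ * B := by
    obtain ⟨X, hX, -, h⟩ := CFC.exists_sqrt_of_isSelfAdjoint_of_quasispectrumRestricts
      hU.isHermitian (QuasispectrumRestricts.nnreal_of_nonneg hU.nonneg)
    refine ⟨X, ?_⟩
    rw [← h, ← Matrix.star_eq_conjTranspose, hX.star_eq]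
  let e := (WithLp.linearEquiv 2 ℂ (ι → ℂ)).symm
  refine ⟨(Submodule.span ℂ (Set.range B.col)).map e.toLinearMap,
    fun i => ⟨e (B.col i), Submodule.mem_map_of_mem (Submodule.subset_span ⟨i, rfl⟩)⟩, ?_, ?_⟩
  · rw [rank_conjTranspose_mul_self, rank_eq_finrank_span_cols]
    exact LinearEquiv.finrank_map_eq e _
  · intro i j
    simp [Matrix.mul_apply, e, PiLp.inner_apply, mul_comm]

section isometry

variable {V : Type} [NormedAddCommGroup V] [InnerProductSpace ℂ V] [FiniteDimensional ℂ V]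

/-- Two finite families with the same Gram matrix are related by a linear isometry. -/
lemma exists_isometry_of_gram_eq {ι : Type} [Fintype ι] (x y : ι → V)
    (h : ∀ i j, ⟪x i, x j⟫_ℂ = ⟪y i, y j⟫_ℂ) : ∃ S : V →ₗᵢ[ℂ] V, ∀ i, S (x i) = y i := by
  classical
  let X := Fintype.linearCombination ℂ x
  let Z := Fintype.linearCombination ℂ y
  have hXZ : ∀ c, ‖Z c‖ = ‖X c‖ := by
    intro c
    have : ⟪Z c, Z c⟫_ℂ = ⟪X c, X c⟫_ℂ := by
      simp only [X, Z, Fintype.linearCombination_apply, sum_inner, inner_sum, inner_smul_left,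
        inner_smul_right, h]
    rw [@norm_eq_sqrt_re_inner ℂ, this, ← @norm_eq_sqrt_re_inner ℂ]
  -- the isometry on the span of `x` is `Z` composed with a linear section `s` of `X`
  obtain ⟨s, hs⟩ := X.rangeRestrict.exists_rightInverse_of_surjective X.range_rangeRestrict
  have hs' : ∀ z, X (s z) = z := fun z => congrArg Subtype.val (LinearMap.congr_fun hs z)
  let L : LinearMap.range X →ₗᵢ[ℂ] V :=
    { toLinearMap := Z ∘ₗ s
      norm_map' := fun z => by
        rw [LinearMap.comp_apply, hXZ, hs']; rfl }
  refine ⟨L.extend, fun i => ?_⟩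
  have hx : X (Pi.single i 1) = x i := by simp [X]
  have hz : Z (Pi.single i 1) = y i := by simp [Z]
  have hmem : x i ∈ LinearMap.range X := ⟨_, hx⟩
  have h1 := L.extend_apply ⟨x i, hmem⟩
  have h2 : Z (s ⟨x i, hmem⟩ - Pi.single i 1) = 0 := by
    rw [← norm_eq_zero, hXZ, map_sub, hs', hx, sub_self, norm_zero]
  rw [map_sub, sub_eq_zero, hz] at h2
  exact h1.trans h2

/-- A finite sequence whose Gram matrix is Toeplitz is an orbit of a linear isometry. -/
lemma exists_isometry_pow {N : ℕ} (v : Fin N → V)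
    (h : ∀ i j i' j' : Fin N, (i' : ℕ) = i + 1 → (j' : ℕ) = j + 1 →
      ⟪v i, v j⟫_ℂ = ⟪v i', v j'⟫_ℂ) :
    ∃ (S : V →ₗᵢ[ℂ] V) (v₀ : V), ∀ j : Fin N, v j = (S.toLinearMap ^ (j : ℕ)) v₀ := by
  rcases N with _ | n
  · exact ⟨LinearIsometry.id, 0, fun j => j.elim0⟩
  obtain ⟨S, hS⟩ := exists_isometry_of_gram_eq (fun i : Fin n => v i.castSucc)
    (fun i : Fin n => v i.succ) (fun i j => h _ _ _ _ (by simp) (by simp))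
  refine ⟨S, v 0, fun j => ?_⟩
  induction j using Fin.induction with
  | zero => simp
  | succ i ih =>
    rw [← hS, ih, Fin.val_succ, pow_succ', Module.End.mul_apply]
    rfl

/-- An isometry of a finite-dimensional space maps an invariant subspace onto itself, hence
preserves its orthogonal complement. -/
lemma isSemisimple_isometry (S : V →ₗᵢ[ℂ] V) : Module.End.IsSemisimple S.toLinearMap := by
  rw [Module.End.isSemisimple_iff]
  intro p hp
  refine ⟨pᗮ, ?_, Submodule.isCompl_orthogonal p⟩
  have hmap : p.map S.toLinearMap = p :=
    Submodule.eq_of_le_of_finrank_eq (Submodule.map_le_iff_le_comap.2 hp)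
      (Submodule.equivMapOfInjective S.toLinearMap S.injective p).finrank_eq.symm
  intro x hx y hy
  rw [← hmap] at hy
  obtain ⟨z, hz, rfl⟩ := hy
  exact (S.inner_map_map z x).trans (hx z hz)

/-- Every vector is a sum of at most `dim V` eigenvectors of a given isometry; their eigenvalues
are distinct and unimodular. -/
lemma exists_eigenvector_sum (S : V →ₗᵢ[ℂ] V) (v₀ : V) :
    ∃ (s : Finset ℂ) (e : ℂ → V), s.card ≤ Module.finrank ℂ V ∧ (∀ μ ∈ s, ‖μ‖ = 1) ∧
      ∀ j : ℕ, (S.toLinearMap ^ j) v₀ = ∑ μ ∈ s, μ ^ j • e μ := by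
  have htop : v₀ ∈ ⨆ μ : ℂ, Module.End.eigenspace S.toLinearMap μ := by
    rw [(isSemisimple_isometry S).iSup_eigenspace_eq_top]; trivial
  obtain ⟨e, he, hsum⟩ := (Submodule.mem_iSup_iff_exists_finsupp _ _).1 htop
  have hev : ∀ μ ∈ e.support, Module.End.HasEigenvector S.toLinearMap μ (e μ) :=
    fun μ hμ => ⟨he μ, Finsupp.mem_support_iff.1 hμ⟩
  refine ⟨e.support, e, ?_, ?_, ?_⟩
  · have := (Module.End.eigenvectors_linearIndependent' S.toLinearMap
      (fun μ : e.support => (μ : ℂ)) Subtype.coe_injective (fun μ => e μ)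
      (fun μ => hev μ μ.2)).fintype_card_le_finrank
    simpa using this
  · intro μ hμ
    have h1 : S (e μ) = μ • e μ := (hev μ hμ).apply_eq_smul
    have h2 := S.norm_map (e μ)
    rw [h1, norm_smul] at h2
    exact (mul_eq_right₀ (norm_ne_zero_iff.2 (hev μ hμ).2)).1 h2
  · intro j
    rw [← hsum, Finsupp.sum, map_sum]
    exact Finset.sum_congr rfl fun μ hμ => (hev μ hμ).pow_apply j

end isometry

/-- Every unimodular number is `e^{i2πf}` for some `f ∈ [0,1)`; its powers form the atom `a(f)`. -/
lemma exists_atom_eq_pow (N : ℕ) (z : ℂ) (hz : ‖z‖ = 1) :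
    ∃ f ∈ Set.Ico (0 : ℝ) 1, ∀ j : Fin N, atom N f j = z ^ (j : ℕ) := by
  refine ⟨Int.fract (z.arg / (2 * Real.pi)), ⟨Int.fract_nonneg _, Int.fract_lt_one _⟩, fun j => ?_⟩
  have key : Complex.exp (2 * Real.pi * Complex.I * (Int.fract (z.arg / (2 * Real.pi)) : ℝ)) = z := by
    have h1 : (2 * Real.pi * Complex.I * (Int.fract (z.arg / (2 * Real.pi)) : ℝ) : ℂ)
        = z.arg * Complex.I - (⌊z.arg / (2 * Real.pi)⌋ : ℤ) * (2 * Real.pi * Complex.I) := by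
      have hpi : (Real.pi : ℂ) ≠ 0 := by exact_mod_cast Real.pi_ne_zero
      rw [Int.fract]
      push_cast
      field_simp
    rw [h1, Complex.exp_sub, Complex.exp_int_mul_two_pi_mul_I, div_one]
    simpa [hz] using Complex.norm_mul_exp_arg_mul_I z
  rw [atom, ← key, ← Complex.exp_nat_mul, key]
  congr 1
  ring

/-- Dropping the zero rows and normalizing the others turns a sum of rank-one terms with
unimodular geometric columns into an atomic decomposition. -/
lemma exists_atomic_of_powers {N L r : ℕ} (Y : Matrix (Fin N) (Fin L) ℂ) (s : Finset ℂ)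
    (ψ : ℂ → Fin L → ℂ) (hs : s.card ≤ r) (hnorm : ∀ z ∈ s, ‖z‖ = 1)
    (hY : ∀ j l, Y j l = ∑ z ∈ s, z ^ (j : ℕ) * ψ z l) :
    ∃ K, K ≤ r ∧ ∃ (c : Fin K → ℝ) (f : Fin K → ℝ) (φ : Fin K → Fin L → ℂ),
      (∀ k, 0 < c k) ∧ (∀ k, f k ∈ Set.Ico (0 : ℝ) 1) ∧
      (∀ k, ∑ l, Complex.normSq (φ k l) = 1) ∧
      (∀ j l, Y j l = ∑ k, (c k : ℂ) * atom N (f k) j * φ k l) := by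
  classical
  let t := s.filter fun z => ψ z ≠ 0
  let g : Fin t.card ≃ t := t.equivFin.symm
  have hpos : ∀ k, 0 < ∑ l, Complex.normSq (ψ (g k) l) := by
    intro k
    obtain ⟨l, hl⟩ := Function.ne_iff.1 (Finset.mem_filter.1 (g k).2).2
    exact Finset.sum_pos' (fun _ _ => Complex.normSq_nonneg _)
      ⟨l, Finset.mem_univ _, Complex.normSq_pos.2 hl⟩
  choose f hf hatom using fun k =>
    exists_atom_eq_pow N (g k : ℂ) (hnorm _ (Finset.mem_filter.1 (g k).2).1)
  let c : Fin t.card → ℝ := fun k => √(∑ l, Complex.normSq (ψ (g k) l))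
  have hc : ∀ k, 0 < c k := fun k => Real.sqrt_pos.2 (hpos k)
  refine ⟨t.card, (Finset.card_filter_le _ _).trans hs, c, f,
    fun k l => (c k : ℂ)⁻¹ * ψ (g k) l, hc, hf, fun k => ?_, fun j l => ?_⟩
  · simp only [Complex.normSq_mul, Complex.normSq_inv, Complex.normSq_ofReal, ← Finset.mul_sum]
    rw [Real.mul_self_sqrt (hpos k).le, inv_mul_cancel₀ (hpos k).ne']
  · have h1 : ∀ k, (c k : ℂ) * atom N (f k) j * ((c k : ℂ)⁻¹ * ψ (g k) l)
        = (g k : ℂ) ^ (j : ℕ) * ψ (g k) l := by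
      intro k
      have : (c k : ℂ) ≠ 0 := by exact_mod_cast (hc k).ne'
      rw [hatom]
      field_simp
    simp only [h1]
    rw [g.sum_comp (fun z : t => (z : ℂ) ^ (j : ℕ) * ψ z l),
      Finset.sum_coe_sort t (fun z => z ^ (j : ℕ) * ψ z l), hY]
    refine (Finset.sum_filter_of_ne (p := fun z => ψ z ≠ 0) fun z _ hz h0 => hz ?_).symm
    simp [h0]

lemma Toep_succ {N : ℕ} (u : Fin N → ℂ) (i j i' j' : Fin N) (hi : (i' : ℕ) = i + 1)
    (hj : (j' : ℕ) = j + 1) : Toep N u i j = Toep N u i' j' := by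
  simp [Toep, hi, hj]

/-- if `U = [[W,Yᴴ],[Y,T(u)]] ⪰ 0` with `rank(U) = r`, then `Y` has an
atomic decomposition into at most `r` atoms; hence `‖Y‖_{A,0} ≤ rank(U)`. -/
theorem atomic_decomposition_of_lowrank_embedding (N L r : ℕ)
    (W : Matrix (Fin L) (Fin L) ℂ) (Y : Matrix (Fin N) (Fin L) ℂ) (u : Fin N → ℂ)
    (hpsd : (blockU N L W Y u).PosSemidef) (hrank : (blockU N L W Y u).rank = r) :
    (∃ K, K ≤ r ∧ ∃ (c : Fin K → ℝ) (f : Fin K → ℝ) (φ : Fin K → Fin L → ℂ),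
      (∀ k, 0 < c k) ∧ (∀ k, f k ∈ Set.Ico (0 : ℝ) 1) ∧
      (∀ k, ∑ l, Complex.normSq (φ k l) = 1) ∧
      (∀ j l, Y j l = ∑ k, (c k : ℂ) * atom N (f k) j * φ k l)) ∧
    AL0 N L Y ≤ r := by
  suffices h : ∃ K, K ≤ r ∧ ∃ (c : Fin K → ℝ) (f : Fin K → ℝ) (φ : Fin K → Fin L → ℂ),
      (∀ k, 0 < c k) ∧ (∀ k, f k ∈ Set.Ico (0 : ℝ) 1) ∧
      (∀ k, ∑ l, Complex.normSq (φ k l) = 1) ∧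
      (∀ j l, Y j l = ∑ k, (c k : ℂ) * atom N (f k) j * φ k l) by
    refine ⟨h, ?_⟩
    obtain ⟨K, hK, hdec⟩ := h
    exact (Nat.sInf_le hdec).trans hK
  obtain ⟨H, x, hH, hx⟩ := exists_gram_of_posSemidef _ hpsd
  obtain ⟨S, v₀, hS⟩ := exists_isometry_pow (fun j : Fin N => x (Sum.inr j)) (by
    intro i j i' j' hi hj
    rw [← hx, ← hx]
    exact Toep_succ u i j i' j' hi hj)
  obtain ⟨s, e, hcard, hunit, hsum⟩ := exists_eigenvector_sum S v₀
  -- the inner product is conjugate-linear on the left, so the atoms come from the conjugates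
  -- of the eigenvalues
  refine exists_atomic_of_powers Y (s.image (starRingEnd ℂ))
    (fun z l => ⟪e (starRingEnd ℂ z), x (Sum.inl l)⟫_ℂ)
    (Finset.card_image_le.trans (hcard.trans (hH.trans hrank).le)) ?_ ?_
  · intro z hz
    obtain ⟨μ, hμ, rfl⟩ := Finset.mem_image.1 hz
    rw [RCLike.norm_conj, hunit μ hμ]
  · intro j l
    have h1 : Y j l = ⟪x (Sum.inr j), x (Sum.inl l)⟫_ℂ := hx (Sum.inr j) (Sum.inl l)
    rw [h1, hS j, hsum, Finset.sum_image (RingHom.injective (starRingEnd ℂ)).injOn]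
    refine (sum_inner (𝕜 := ℂ) s (fun μ => μ ^ (j : ℕ) • e μ) (x (Sum.inl l))).trans ?_
    exact Finset.sum_congr rfl fun μ _ => by simp [inner_smul_left]
end

section
/- For any Y ∈ ℂ^{N×L}, the atomic norm ‖Y‖_A = inf{Σ_k c_k : Y = Σ_k c_k a(f_k)φ_k, c_k ≥ 0, f_k ∈ [0,1), ‖φ_k‖₂ = 1} equals the optimal value of the SDP: minimize (1/(2√N))·tr(U) over W ∈ ℂ^{L×L}, u ∈ ℂ^N, subject to U = [[W, Yᴴ],[Y, T(u)]] ⪰ 0. -/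
/-!
Feasible points of the SDP and atomic decompositions are converted into each other without
increasing the cost, so the two infima agree (also when both sets are empty).

From a decomposition, `U` is a weighted sum of rank-one matrices, with a scaling that makes both
diagonal blocks have trace `√N Σ c_k` (`exists_sdp_le`).

Conversely, write a feasible `U` as a Gram matrix. Let `v_0, …, v_{N-1}` be the vectors of the
Toeplitz block and `x_l` those of the block `W`. The Toeplitz structure says that the shift
`v_j ↦ v_{j+1}` preserves inner products, so it extends to a linear isometry `V` of the whole
finite-dimensional space (`exists_isometry_of_gram_eq`). Such a `V` is unitarily diagonalisable with
unimodular eigenvalues (`exists_eigenbasis`), and expanding `Y j l = ⟪V^j v_0, x_l⟫` in an eigenbasis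
exhibits `Y` as a sum of atoms (`exists_spectral_representation`). The cost is bounded term by term
with the AM-GM inequality (`exists_atomic_le`).
-/

open Complex Matrix Finset
open scoped ComplexOrder

/-- The atomic norm `‖Y‖_A`: the infimum of `Σ c_k` over atomic decompositions
`Y = Σ c_k a(f_k)φ_k` with `c_k ≥ 0`, `f_k ∈ [0,1)`, `‖φ_k‖₂ = 1`. -/
noncomputable def ANorm (N L : ℕ) (Y : Matrix (Fin N) (Fin L) ℂ) : ℝ :=
  sInf {t | ∃ (K : ℕ) (c : Fin K → ℝ) (f : Fin K → ℝ) (φ : Fin K → Fin L → ℂ),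
    (∀ k, 0 ≤ c k) ∧ (∀ k, f k ∈ Set.Ico (0 : ℝ) 1) ∧
    (∀ k, ∑ l, Complex.normSq (φ k l) = 1) ∧
    (∀ j l, Y j l = ∑ k, (c k : ℂ) * atom N (f k) j * φ k l) ∧
    t = ∑ k, c k}

/-- A linear isometry of a finite-dimensional complex inner product space has an orthonormal
eigenbasis with unimodular eigenvalues: the orthogonal complement of the span of the eigenspaces is
invariant, so if it were nonzero it would contain a further eigenvector. -/
theorem exists_eigenbasis {E : Type*} [NormedAddCommGroup E] [InnerProductSpace ℂ E]
    [FiniteDimensional ℂ E] (V : E →ₗᵢ[ℂ] E) :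
    ∃ (b : OrthonormalBasis (Fin (Module.finrank ℂ E)) ℂ E)
      (z : Fin (Module.finrank ℂ E) → ℂ), ∀ m, V (b m) = z m • b m ∧ ‖z m‖ = 1 := by
  classical
  have hunit : ∀ (μ : ℂ) (x : E), x ≠ 0 → V x = μ • x → ‖μ‖ = 1 := by
    intro μ x hx h
    have h1 := V.norm_map x
    rw [h, norm_smul] at h1
    exact mul_right_cancel₀ (norm_ne_zero_iff.mpr hx) (by rw [h1, one_mul])
  let F : Module.End.Eigenvalues V.toLinearMap → Submodule ℂ E :=
    fun μ => Module.End.eigenspace V.toLinearMap μ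
  have hF : ∀ μ x, x ∈ F μ ↔ V x = (μ : ℂ) • x := fun μ x => Module.End.mem_eigenspace_iff
  have horth : OrthogonalFamily ℂ (fun μ => F μ) fun μ => (F μ).subtypeₗᵢ := by
    refine OrthogonalFamily.of_pairwise fun μ ν hne x hx y hy => ?_
    rw [hF] at hx hy
    rcases eq_or_ne x 0 with rfl | hx0
    · simp
    have hμ := hunit _ x hx0 hx
    have h := V.inner_map_map x y
    rw [hx, hy, inner_smul_left, inner_smul_right, ← mul_assoc] at h
    refine inner_eq_zero_symm.mp ?_
    by_contra hxy
    have h2 : (starRingEnd ℂ) (μ : ℂ) * (ν : ℂ) = 1 :=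
      mul_right_cancel₀ hxy (by rw [h, one_mul])
    apply hne
    apply Subtype.ext
    have h3 : (μ : ℂ) * (starRingEnd ℂ) (μ : ℂ) = 1 := by
      rw [Complex.mul_conj, Complex.normSq_eq_norm_sq, hμ]; simp
    calc (μ : ℂ) = μ * ((starRingEnd ℂ) (μ : ℂ) * (ν : ℂ)) := by rw [h2, mul_one]
      _ = ν := by rw [← mul_assoc, h3, one_mul]
  have htop : (iSup F)ᗮ = ⊥ := by
    have hinv : ∀ w ∈ (iSup F)ᗮ, V.toLinearMap w ∈ (iSup F)ᗮ := by
      intro w hw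
      rw [Submodule.mem_orthogonal] at hw ⊢
      intro x hx
      induction hx using Submodule.iSup_induction' with
      | mem μ x hx =>
        rcases eq_or_ne x 0 with rfl | hx0
        · simp
        have hVx := (hF _ _).1 hx
        have hμ := hunit _ x hx0 hVx
        have hμ0 : (μ : ℂ) ≠ 0 := norm_ne_zero_iff.mp (by rw [hμ]; exact one_ne_zero)
        have h : inner ℂ (V x) (V w) = 0 := by
          rw [V.inner_map_map]; exact hw x (Submodule.mem_iSup_of_mem μ hx)
        rw [hVx, inner_smul_left] at h
        exact (mul_eq_zero.mp h).resolve_left (by simpa using hμ0)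
      | zero => simp
      | add x y _ _ hx hy => rw [inner_add_left, hx, hy, add_zero]
    by_contra hne
    have : Nontrivial ((iSup F)ᗮ : Submodule ℂ E) := Submodule.nontrivial_iff_ne_bot.mpr hne
    obtain ⟨μ, hμ⟩ := Module.End.exists_eigenvalue (V.toLinearMap.restrict hinv)
    obtain ⟨⟨x, hxm⟩, hx⟩ := hμ.exists_hasEigenvector
    have hx0 : x ≠ 0 := fun h => hx.2 (Subtype.ext h)
    have hVx : V.toLinearMap x = μ • x := congrArg Subtype.val hx.apply_eq_smul
    have hev : Module.End.HasEigenvector V.toLinearMap μ x :=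
      ⟨Module.End.mem_eigenspace_iff.mpr hVx, hx0⟩
    have hxF : x ∈ iSup F :=
      Submodule.mem_iSup_of_mem (⟨μ, Module.End.hasEigenvalue_of_hasEigenvector hev⟩ :
        Module.End.Eigenvalues V.toLinearMap) hev.1
    exact hx0 (inner_self_eq_zero.mp ((Submodule.mem_orthogonal _ _).1 hxm x hxF))
  have hint : DirectSum.IsInternal F := horth.isInternal_iff.mpr htop
  let b := hint.subordinateOrthonormalBasis rfl horth
  refine ⟨b, fun m => ((hint.subordinateOrthonormalBasisIndex rfl m horth :
    Module.End.Eigenvalues V.toLinearMap) : ℂ), fun m => ?_⟩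
  have h := (hF _ _).1 (hint.subordinateOrthonormalBasis_subordinate rfl m horth)
  exact ⟨h, hunit _ _ (b.orthonormal.ne_zero m) h⟩

/-- Two families of vectors with the same Gram matrix are related by a linear isometry of the whole
space: `∑ cᵢ aᵢ ↦ ∑ cᵢ bᵢ` is well defined and isometric on the span of the `aᵢ`. -/
theorem exists_isometry_of_gram_eq_s11 {E : Type*} [NormedAddCommGroup E] [InnerProductSpace ℂ E]
    [FiniteDimensional ℂ E] {n : ℕ} (a b : Fin n → E)
    (h : ∀ i j, inner ℂ (b i) (b j) = inner ℂ (a i) (a j)) :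
    ∃ V : E →ₗᵢ[ℂ] E, ∀ i, V (a i) = b i := by
  let A := Fintype.linearCombination ℂ a
  let B := Fintype.linearCombination ℂ b
  have hAB : ∀ c, ‖B c‖ = ‖A c‖ := by
    intro c
    have h1 : inner ℂ (B c) (B c) = inner ℂ (A c) (A c) := by
      simp only [A, B, Fintype.linearCombination_apply, sum_inner, inner_sum, inner_smul_left,
        inner_smul_right, h]
    rw [inner_self_eq_norm_sq_to_K, inner_self_eq_norm_sq_to_K] at h1
    exact (sq_eq_sq₀ (norm_nonneg _) (norm_nonneg _)).1 (by exact_mod_cast h1)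
  obtain ⟨g, hg⟩ := A.rangeRestrict.exists_rightInverse_of_surjective
    (LinearMap.range_rangeRestrict A)
  have hAg : ∀ y : LinearMap.range A, A (g y) = y := fun y =>
    congrArg Subtype.val (LinearMap.congr_fun hg y)
  let f : LinearMap.range A →ₗᵢ[ℂ] E :=
    { toLinearMap := B ∘ₗ g
      norm_map' := fun y => by
        rw [LinearMap.comp_apply, hAB, hAg, Submodule.coe_norm] }
  refine ⟨f.extend, fun i => ?_⟩
  have hAi : A (Pi.single i 1) = a i := by simp [A]
  have hBi : B (Pi.single i 1) = b i := by simp [B]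
  have hfi := f.extend_apply ⟨a i, ⟨_, hAi⟩⟩
  refine hfi.trans ?_
  change B (g ⟨a i, ⟨_, hAi⟩⟩) = b i
  rw [← hBi, ← sub_eq_zero, ← map_sub, ← norm_eq_zero, hAB, map_sub, hAg, hAi, sub_self, norm_zero]

/-- Every complex number of modulus one is `exp (2πi f)` for some `f ∈ [0, 1)`, so its powers are
the entries of an atom. -/
theorem exists_freq {w : ℂ} (hw : ‖w‖ = 1) :
    ∃ f ∈ Set.Ico (0 : ℝ) 1, ∀ (N : ℕ) (j : Fin N), atom N f j = w ^ (j : ℕ) := by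
  refine ⟨Int.fract (w.arg / (2 * Real.pi)), ⟨Int.fract_nonneg _, Int.fract_lt_one _⟩, ?_⟩
  intro N j
  have hpi : (Real.pi : ℂ) ≠ 0 := by exact_mod_cast Real.pi_ne_zero
  have hexp : Complex.exp (2 * Real.pi * Complex.I *
      (Int.fract (w.arg / (2 * Real.pi)) : ℝ)) = w := by
    have h1 : (2 * Real.pi * Complex.I * (Int.fract (w.arg / (2 * Real.pi)) : ℝ) : ℂ) =
        w.arg * Complex.I - (⌊w.arg / (2 * Real.pi)⌋ : ℤ) * (2 * Real.pi * Complex.I) := by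
      rw [Int.fract]
      push_cast
      field_simp
    rw [h1, Complex.exp_sub, Complex.exp_int_mul_two_pi_mul_I, div_one]
    simpa [hw] using Complex.norm_mul_exp_arg_mul_I w
  conv_rhs => rw [← hexp, ← Complex.exp_nat_mul]
  rw [atom]
  congr 1
  ring

/-- A positive semidefinite matrix is the Gram matrix of some family of vectors. -/
theorem exists_gram {ι : Type*} [Fintype ι] {U : Matrix ι ι ℂ} (hU : U.PosSemidef) :
    ∃ x : ι → EuclideanSpace ℂ ι, ∀ i j, U i j = inner ℂ (x i) (x j) := by
  classical
  open scoped MatrixOrder in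
  obtain ⟨B, rfl⟩ := CStarAlgebra.nonneg_iff_eq_star_mul_self.mp hU.nonneg
  refine ⟨fun i => WithLp.toLp 2 fun k => B k i, fun i j => ?_⟩
  simp [Matrix.mul_apply, Matrix.star_apply, PiLp.inner_apply, mul_comm]

/-- Polar form `g = ‖g‖₂ φ` with `‖φ‖₂ = 1`; for `g = 0` an arbitrary unit vector serves, which is
why `0 < L` is needed. -/
theorem exists_unit_direction {L : ℕ} (hL : 0 < L) (g : Fin L → ℂ) :
    ∃ φ : Fin L → ℂ, ∑ l, Complex.normSq (φ l) = 1 ∧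
      ∀ l, g l = (√(∑ l, Complex.normSq (g l)) : ℝ) * φ l := by
  have hnn : 0 ≤ ∑ l, Complex.normSq (g l) := Finset.sum_nonneg fun l _ => Complex.normSq_nonneg _
  rcases hnn.eq_or_lt with h0 | hpos
  · refine ⟨Pi.single ⟨0, hL⟩ 1, ?_, fun l => ?_⟩
    · rw [Finset.sum_eq_single ⟨0, hL⟩] <;> simp +contextual
    · have := (Finset.sum_eq_zero_iff_of_nonneg fun l _ => Complex.normSq_nonneg (g l)).1 h0.symm l
        (Finset.mem_univ l)
      rw [← h0]
      simpa using this
  · have hs : (√(∑ l, Complex.normSq (g l))) ≠ 0 := (Real.sqrt_pos.mpr hpos).ne'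
    refine ⟨fun l => g l / (√(∑ l, Complex.normSq (g l)) : ℝ), ?_, fun l => ?_⟩
    · simp only [Complex.normSq_div, Complex.normSq_ofReal, Real.mul_self_sqrt hnn]
      rw [← Finset.sum_div, div_self hpos.ne']
    · rw [mul_div_cancel₀]
      exact_mod_cast hs

/-- Simultaneous Carathéodory representation of the blocks of a feasible `U`. Let `v_j` and `x_l` be
Gram vectors of `U`. Since `T(u)` is Toeplitz, some isometry `V` satisfies `V v_j = v_{j+1}`, so in
an orthonormal eigenbasis `b_k` of `V` the coordinates of `v_j` are those of `v_0` times the `j`-th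
powers of unimodular numbers, that is, times entries of atoms. Then `α k = ⟪v_0, b_k⟫` and
`β k l = ⟪b_k, x_l⟫`; the frequencies may repeat, and the rank of `T(u)` plays no role. -/
theorem exists_spectral_representation {N L : ℕ} (hN : 0 < N) {W : Matrix (Fin L) (Fin L) ℂ}
    {Y : Matrix (Fin N) (Fin L) ℂ} {u : Fin N → ℂ} (hU : (blockU N L W Y u).PosSemidef) :
    ∃ (K : ℕ) (f : Fin K → ℝ) (α : Fin K → ℂ) (β : Fin K → Fin L → ℂ),
      (∀ k, f k ∈ Set.Ico (0 : ℝ) 1) ∧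
      (∀ j l, Y j l = ∑ k, atom N (f k) j * (α k * β k l)) ∧
      ((blockU N L W Y u).trace).re =
        ∑ k, (N * Complex.normSq (α k) + ∑ l, Complex.normSq (β k l)) := by
  obtain ⟨n, rfl⟩ : ∃ n, N = n + 1 := ⟨N - 1, by omega⟩
  obtain ⟨x, hx⟩ := exists_gram hU
  let v : Fin (n + 1) → EuclideanSpace ℂ (Fin L ⊕ Fin (n + 1)) := fun j => x (Sum.inr j)
  have hv : ∀ j k, Toep (n + 1) u j k = inner ℂ (v j) (v k) := fun j k =>
    hx (Sum.inr j) (Sum.inr k)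
  have hY : ∀ j l, Y j l = inner ℂ (v j) (x (Sum.inl l)) := fun j l => hx (Sum.inr j) (Sum.inl l)
  obtain ⟨V, hV⟩ := exists_isometry_of_gram_eq_s11 (fun i : Fin n => v i.castSucc)
    (fun i : Fin n => v i.succ) (fun i j => by
      rw [← hv, ← hv]
      simp [Toep])
  obtain ⟨b, z, hbz⟩ := exists_eigenbasis V
  have hstep : ∀ m w, inner ℂ (V w) (b m) = (z m)⁻¹ * inner ℂ w (b m) := by
    intro m w
    have hz0 : z m ≠ 0 := norm_ne_zero_iff.mp (by rw [(hbz m).2]; exact one_ne_zero)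
    have h := V.inner_map_map w (b m)
    rw [(hbz m).1, inner_smul_right] at h
    rw [← h, inv_mul_cancel_left₀ hz0]
  have hcoef : ∀ m (j : Fin (n + 1)),
      inner ℂ (v j) (b m) = (z m)⁻¹ ^ (j : ℕ) * inner ℂ (v 0) (b m) := by
    intro m j
    induction j using Fin.induction with
    | zero => simp
    | succ i ih => rw [← hV i, hstep, ih, Fin.val_succ, Fin.val_castSucc, pow_succ]; ring
  have hfreq : ∀ m, ∃ f ∈ Set.Ico (0 : ℝ) 1, ∀ (N : ℕ) (j : Fin N),
      atom N f j = (z m)⁻¹ ^ (j : ℕ) := fun m =>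
    exists_freq (by rw [norm_inv, (hbz m).2, inv_one])
  choose f hf hatom using hfreq
  refine ⟨_, f, fun m => inner ℂ (v 0) (b m), fun m l => inner ℂ (b m) (x (Sum.inl l)), hf, ?_, ?_⟩
  · intro j l
    rw [hY, ← b.sum_inner_mul_inner]
    exact Finset.sum_congr rfl fun m _ => by rw [hcoef, hatom]; ring
  · have hdiag : ∀ i, (blockU (n + 1) L W Y u i i).re = ‖x i‖ ^ 2 := fun i => by
      rw [hx, inner_self_eq_norm_sq_to_K]
      norm_cast
    have hconst : ∀ j, ‖v j‖ ^ 2 = ‖v 0‖ ^ 2 := fun j => by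
      have h1 := hdiag (Sum.inr j)
      have h0 := hdiag (Sum.inr 0)
      rw [← h1, ← h0]
      simp [blockU, Toep]
    have htr : ((blockU (n + 1) L W Y u).trace).re =
        ∑ l, ‖x (Sum.inl l)‖ ^ 2 + (n + 1 : ℕ) * ‖v 0‖ ^ 2 := by
      rw [Matrix.trace, Complex.re_sum, Fintype.sum_sum_type]
      simp only [Matrix.diag_apply, hdiag]
      congr 1
      change ∑ j, ‖v j‖ ^ 2 = _
      rw [Finset.sum_congr rfl fun j _ => hconst j]
      simp
    rw [htr, Finset.sum_add_distrib, ← Finset.mul_sum, Finset.sum_comm]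
    simp only [Complex.normSq_eq_norm_sq, b.sum_sq_norm_inner_left, b.sum_sq_norm_inner_right]
    ring

/-- Every feasible point of the SDP yields an atomic decomposition of no larger cost: the weight of
the `k`-th atom is `‖α k‖ ‖β k‖₂`, and the AM-GM inequality bounds it by
`(N ‖α k‖² + ‖β k‖₂²) / (2√N)`, the `k`-th share of the objective. -/
theorem exists_atomic_le {N L : ℕ} (Y : Matrix (Fin N) (Fin L) ℂ) {W : Matrix (Fin L) (Fin L) ℂ}
    {u : Fin N → ℂ} (hU : (blockU N L W Y u).PosSemidef) :
    ∃ (K : ℕ) (c : Fin K → ℝ) (f : Fin K → ℝ) (φ : Fin K → Fin L → ℂ),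
      (∀ k, 0 ≤ c k) ∧ (∀ k, f k ∈ Set.Ico (0 : ℝ) 1) ∧
      (∀ k, ∑ l, Complex.normSq (φ k l) = 1) ∧
      (∀ j l, Y j l = ∑ k, (c k : ℂ) * atom N (f k) j * φ k l) ∧
      ∑ k, c k ≤ (1 / (2 * Real.sqrt N)) * ((blockU N L W Y u).trace).re := by
  have htr : 0 ≤ ((blockU N L W Y u).trace).re := (Complex.le_def.1 hU.trace_nonneg).1
  by_cases hNL : 0 < N ∧ 0 < L
  · obtain ⟨hN, hL⟩ := hNL
    obtain ⟨K, f, α, β, hf, hY, htrace⟩ := exists_spectral_representation hN hU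
    choose φ hφ hg using fun k => exists_unit_direction hL fun l => α k * β k l
    refine ⟨K, fun k => √(∑ l, Complex.normSq (α k * β k l)), f, φ, fun k => Real.sqrt_nonneg _, hf, hφ, fun j l => ?_, ?_⟩
    · rw [hY]
      exact Finset.sum_congr rfl fun k _ => by rw [hg k l]; ring
    · rw [htrace, Finset.mul_sum]
      refine Finset.sum_le_sum fun k _ => ?_
      simp only [Complex.normSq_mul]
      rw [← Finset.mul_sum, Real.sqrt_mul (Complex.normSq_nonneg _)]
      have hs : 0 < √(N : ℝ) := Real.sqrt_pos.mpr (by exact_mod_cast hN)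
      have hN2 : √(N : ℝ) ^ 2 = N := Real.sq_sqrt (Nat.cast_nonneg N)
      have hA := Real.sq_sqrt (Complex.normSq_nonneg (α k))
      have hB := Real.sq_sqrt
        (Finset.sum_nonneg fun l (_ : l ∈ Finset.univ) => Complex.normSq_nonneg (β k l))
      rw [one_div_mul_eq_div, le_div_iff₀ (by positivity)]
      nlinarith [sq_nonneg (√(N : ℝ) * √(Complex.normSq (α k)) -
        √(∑ l, Complex.normSq (β k l)))]
  · -- For `N = 0` or `L = 0` the matrix `Y` is empty, and so is the decomposition.
    refine ⟨0, Fin.elim0, Fin.elim0, fun k => k.elim0, fun k => k.elim0, fun k => k.elim0,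
      fun k => k.elim0, fun j l => (hNL ⟨j.pos, l.pos⟩).elim, ?_⟩
    simpa using mul_nonneg (by positivity) htr

theorem normSq_atom (N : ℕ) (f : ℝ) (j : Fin N) : Complex.normSq (atom N f j) = 1 := by
  rw [Complex.normSq_eq_norm_sq, atom]
  have : (2 * Real.pi * Complex.I * ((j : ℕ) : ℂ) * (f : ℂ)) =
    ((2 * Real.pi * (j : ℕ) * f : ℝ) : ℂ) * Complex.I := by push_cast; ring
  rw [this, Complex.norm_exp_ofReal_mul_I, one_pow]

theorem atom_mul_conj (N : ℕ) (f : ℝ) {i j k : Fin N} (h : (i : ℕ) + j = k) :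
    atom N f j * (starRingEnd ℂ) (atom N f k) = (starRingEnd ℂ) (atom N f i) := by
  simp only [atom, ← Complex.exp_conj, ← Complex.exp_add, ← h]
  congr 1
  simp only [map_mul, Complex.conj_ofReal, Complex.conj_I, map_natCast, map_ofNat]
  push_cast
  ring

/-- Every atomic decomposition yields a feasible point of the SDP of no larger cost: take
`U = Σ c_k h_k h_kᴴ`, where `h_k` stacks `N^(1/4) φ_kᴴ` over `N^(-1/4) a(f_k)`; this scaling balances
the traces of the two diagonal blocks. -/
theorem exists_sdp_le {N L : ℕ} (Y : Matrix (Fin N) (Fin L) ℂ) {K : ℕ} {c f : Fin K → ℝ}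
    {φ : Fin K → Fin L → ℂ} (hc : ∀ k, 0 ≤ c k) (hφ : ∀ k, ∑ l, Complex.normSq (φ k l) = 1)
    (hY : ∀ j l, Y j l = ∑ k, (c k : ℂ) * atom N (f k) j * φ k l) :
    ∃ (W : Matrix (Fin L) (Fin L) ℂ) (u : Fin N → ℂ), (blockU N L W Y u).PosSemidef ∧
      (1 / (2 * Real.sqrt N)) * ((blockU N L W Y u).trace).re ≤ ∑ k, c k := by
  rcases Nat.eq_zero_or_pos N with rfl | hN
  · -- Here `√N = 0`, so the objective is `0` by the convention `1 / 0 = 0`.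
    refine ⟨0, 0, ?_, by simpa using Finset.sum_nonneg fun k _ => hc k⟩
    convert Matrix.PosSemidef.zero (R := ℂ) (n := Fin L ⊕ Fin 0)
    ext (i | i) (j | j)
    · rfl
    · exact j.elim0
    · exact i.elim0
    · exact i.elim0
  have hs : 0 < √(N : ℝ) := Real.sqrt_pos.mpr (by exact_mod_cast hN)
  have hs0 : ((√(N : ℝ) : ℝ) : ℂ) ≠ 0 := by exact_mod_cast hs.ne'
  let r : ℝ := √√(N : ℝ)
  have hr : 0 < r := Real.sqrt_pos.mpr hs
  have hr2 : r * r = √(N : ℝ) := Real.mul_self_sqrt hs.le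
  have hr0 : (r : ℂ) ≠ 0 := by exact_mod_cast hr.ne'
  let p : Fin K → ℝ := fun k => √(c k)
  have hp : ∀ k, (p k : ℂ) * p k = c k := fun k => by
    exact_mod_cast Real.mul_self_sqrt (hc k)
  -- The rows of `B` are `√c_k h_kᴴ`.
  let B : Matrix (Fin K) (Fin L ⊕ Fin N) ℂ := fun k => Sum.elim
    (fun l => p k * r * φ k l) (fun j => p k * (r : ℂ)⁻¹ * (starRingEnd ℂ) (atom N (f k) j))
  let u : Fin N → ℂ := fun m => ∑ k, (c k : ℂ) * ((r : ℂ)⁻¹ * (r : ℂ)⁻¹) *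
    (starRingEnd ℂ) (atom N (f k) m)
  have hBl : ∀ k l, B k (Sum.inl l) = p k * r * φ k l := fun _ _ => rfl
  have hBr : ∀ k j, B k (Sum.inr j) = p k * (r : ℂ)⁻¹ * (starRingEnd ℂ) (atom N (f k) j) :=
    fun _ _ => rfl
  have hG : ∀ i j, (Bᴴ * B) i j = ∑ k, (starRingEnd ℂ) (B k i) * B k j := fun _ _ => rfl
  have hblock : blockU N L (Bᴴ * B).toBlocks₁₁ Y u = Bᴴ * B := by
    ext (i | i) (j | j)
    · rfl
    · rw [hG]
      change (starRingEnd ℂ) (Y j i) = _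
      rw [hY, map_sum]
      refine Finset.sum_congr rfl fun k _ => ?_
      simp only [hBl, hBr, ← hp, map_mul, Complex.conj_ofReal]
      field_simp
    · rw [hG]
      change Y i j = _
      rw [hY]
      refine Finset.sum_congr rfl fun k _ => ?_
      simp only [hBl, hBr, ← hp, map_mul, map_inv₀, Complex.conj_ofReal, Complex.conj_conj]
      field_simp
    · rw [hG]
      change Toep N u i j = _
      rw [Toep]
      split_ifs with h
      · refine Finset.sum_congr rfl fun k _ => ?_
        rw [← atom_mul_conj N (f k) (j := i) (k := j) (by simp; omega), ← hp]
        simp only [hBr, map_mul, map_inv₀, Complex.conj_ofReal, Complex.conj_conj]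
        ring
      · rw [map_sum]
        refine Finset.sum_congr rfl fun k _ => ?_
        rw [← atom_mul_conj N (f k) (j := j) (k := i) (by simp; omega), ← hp]
        simp only [hBr, map_mul, map_inv₀, Complex.conj_ofReal, Complex.conj_conj]
        ring
  refine ⟨(Bᴴ * B).toBlocks₁₁, u, ?_, ?_⟩
  · rw [hblock]
    exact Matrix.posSemidef_conjTranspose_mul_self B
  · have htr : ((Bᴴ * B).trace).re = 2 * √(N : ℝ) * ∑ k, c k := by
      have h1 : ((Bᴴ * B).trace).re = ∑ k, ∑ i, Complex.normSq (B k i) := by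
        rw [Matrix.trace, Finset.sum_comm, Complex.re_sum]
        refine Finset.sum_congr rfl fun i _ => ?_
        rw [Matrix.diag_apply, Matrix.mul_apply, Complex.re_sum]
        refine Finset.sum_congr rfl fun k _ => ?_
        rw [Matrix.conjTranspose_apply, Complex.star_def, mul_comm, Complex.mul_conj,
          Complex.ofReal_re]
      rw [h1, Finset.mul_sum]
      refine Finset.sum_congr rfl fun k _ => ?_
      have hpk : p k * p k = c k := Real.mul_self_sqrt (hc k)
      simp only [B, Fintype.sum_sum_type, Sum.elim_inl, Sum.elim_inr, Complex.normSq_mul,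
        Complex.normSq_ofReal, Complex.normSq_inv, Complex.normSq_conj, normSq_atom,
        ← Finset.mul_sum, hφ, hpk, hr2, Finset.sum_const, Finset.card_univ, Fintype.card_fin,
        nsmul_eq_mul, mul_one]
      have hdiv : (N : ℝ) * (√(N : ℝ))⁻¹ = √(N : ℝ) := by
        rw [← div_eq_mul_inv, Real.div_sqrt]
      linear_combination (c k) * hdiv
    rw [hblock, htr]
    field_simp
    exact le_rfl

/-- the atomic norm equals the optimal value of the SDP
`min (1/(2√N)) tr(U)` over PSD `U = [[W,Yᴴ],[Y,T(u)]]`. -/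
theorem ANorm_eq_SDP (N L : ℕ) (Y : Matrix (Fin N) (Fin L) ℂ) :
    ANorm N L Y = sInf {v | ∃ (W : Matrix (Fin L) (Fin L) ℂ) (u : Fin N → ℂ),
      (blockU N L W Y u).PosSemidef ∧
      v = (1 / (2 * Real.sqrt N)) * ((blockU N L W Y u).trace).re} := by
  unfold ANorm
  set S := {t : ℝ | ∃ (K : ℕ) (c : Fin K → ℝ) (f : Fin K → ℝ) (φ : Fin K → Fin L → ℂ),
    (∀ k, 0 ≤ c k) ∧ (∀ k, f k ∈ Set.Ico (0 : ℝ) 1) ∧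
    (∀ k, ∑ l, Complex.normSq (φ k l) = 1) ∧
    (∀ j l, Y j l = ∑ k, (c k : ℂ) * atom N (f k) j * φ k l) ∧
    t = ∑ k, c k} with hS
  set D := {v : ℝ | ∃ (W : Matrix (Fin L) (Fin L) ℂ) (u : Fin N → ℂ),
      (blockU N L W Y u).PosSemidef ∧
      v = (1 / (2 * Real.sqrt N)) * ((blockU N L W Y u).trace).re} with hD
  -- `S` and `D` have the same lower bounds; if one is empty, so is the other.
  have hSD : ∀ t ∈ S, ∃ v ∈ D, v ≤ t := by
    rintro t ⟨K, c, f, φ, hc, -, hφ, hY, rfl⟩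
    obtain ⟨W, u, hU, hle⟩ := exists_sdp_le Y hc hφ hY
    exact ⟨_, ⟨W, u, hU, rfl⟩, hle⟩
  have hDS : ∀ v ∈ D, ∃ t ∈ S, t ≤ v := by
    rintro v ⟨W, u, hU, rfl⟩
    obtain ⟨K, c, f, φ, hc, hf, hφ, hY, hle⟩ := exists_atomic_le Y hU
    exact ⟨_, ⟨K, c, f, φ, hc, hf, hφ, hY, rfl⟩, hle⟩
  have hSb : BddBelow S := ⟨0, by
    rintro t ⟨K, c, f, φ, hc, -, -, -, rfl⟩
    exact Finset.sum_nonneg fun k _ => hc k⟩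
  have hDb : BddBelow D := ⟨0, by
    rintro v ⟨W, u, hU, rfl⟩
    exact mul_nonneg (by positivity) (Complex.le_def.1 hU.trace_nonneg).1⟩
  rcases S.eq_empty_or_nonempty with hSe | hSn
  · have hDe : D = ∅ := Set.eq_empty_iff_forall_notMem.2 fun v hv => by
      obtain ⟨t, ht, -⟩ := hDS v hv
      simp [hSe] at ht
    rw [hSe, hDe]
  · have hDn : D.Nonempty := by
      obtain ⟨t, ht⟩ := hSn
      obtain ⟨v, hv, -⟩ := hSD t ht
      exact ⟨v, hv⟩
    apply le_antisymm
    · refine le_csInf hDn fun v hv => ?_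
      obtain ⟨t, ht, hle⟩ := hDS v hv
      exact (csInf_le hSb ht).trans hle
    · refine le_csInf hSn fun t ht => ?_
      obtain ⟨v, hv, hle⟩ := hSD t ht
      exact (csInf_le hDb hv).trans hle
end
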